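/- Let 𝒞 be a finitely complete category, let 𝔘 be an ultrafilter on 𝒞, let C be an object of 𝒞, and let S₁, …, Sₙ be a finite sequence of sieves on C whose union S₁ ∪ ⋯ ∪ Sₙ belongs to 𝔘(C). Then at least one of the sieves Sᵢ belongs to 𝔘(C). -/

import Mathlib

open CategoryTheory Limits

universe w v u

/-- A filter on a category: assigns to each object a collection of sieves that is
upward closed, closed under finite intersections, and omits the empty sieve. -/
structure CatFilter (𝒞 : Type u) [Category.{v} 𝒞] where
  F : ∀ X : 𝒞, Set (Sieve X)
  /-- (F1) upward closure -/
  mono : ∀ {X : 𝒞} {S R : Sieve X}, S ∈ F X → S ≤ R → R ∈ F X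
  /-- (F2) every finite intersection of members is a member -/
  finInter : ∀ {X : 𝒞} (T : Finset (Sieve X)), (∀ S ∈ T, S ∈ F X) → T.inf id ∈ F X
  /-- (F3) the empty sieve is not a member -/
  bot_not_mem : ∀ X : 𝒞, ⊥ ∉ F X

/-- An ultrafilter: a filter with no strictly finer filter. -/
def CatFilter.IsUltra {𝒞 : Type u} [Category.{v} 𝒞] (𝔘 : CatFilter 𝒞) : Prop :=
  ∀ 𝔊 : CatFilter 𝒞, (∀ X : 𝒞, 𝔘.F X ⊆ 𝔊.F X) → ∀ X : 𝒞, 𝔊.F X ⊆ 𝔘.F X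

namespace CatFilter

variable {𝒞 : Type u} [Category.{v} 𝒞]

theorem inf_mem (𝔉 : CatFilter 𝒞) {X : 𝒞} {S R : Sieve X} (hS : S ∈ 𝔉.F X)
    (hR : R ∈ 𝔉.F X) : S ⊓ R ∈ 𝔉.F X := by
  classical
  have h := 𝔉.finInter {S, R} (by simp [hS, hR])
  simpa using h

theorem top_mem (𝔉 : CatFilter 𝒞) (X : 𝒞) : ⊤ ∈ 𝔉.F X := by
  simpa using 𝔉.finInter (X := X) ∅ (by simp)

/-- The filter generated by `𝔉` and a family of sieves meeting every member of `𝔉`. -/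
def adjoin (𝔉 : CatFilter 𝒞) (A : ∀ X : 𝒞, Sieve X)
    (hA : ∀ X, ∀ R ∈ 𝔉.F X, A X ⊓ R ≠ ⊥) : CatFilter 𝒞 where
  F X := {T | ∃ R ∈ 𝔉.F X, A X ⊓ R ≤ T}
  mono := by
    rintro X S T ⟨R, hR, hRS⟩ hST
    exact ⟨R, hR, hRS.trans hST⟩
  finInter := by
    classical
    intro X T
    induction T using Finset.induction_on with
    | empty => exact fun _ => ⟨⊤, 𝔉.top_mem X, by simp⟩
    | insert S T _ ih =>
      intro hT
      obtain ⟨R, hR, hRS⟩ := hT S (Finset.mem_insert_self S T)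
      obtain ⟨R', hR', hRT⟩ := ih fun S' hS' => hT S' (Finset.mem_insert_of_mem hS')
      refine ⟨R ⊓ R', 𝔉.inf_mem hR hR', ?_⟩
      rw [Finset.inf_insert]
      exact le_inf ((inf_le_inf_left _ inf_le_left).trans hRS)
        ((inf_le_inf_left _ inf_le_right).trans hRT)
  bot_not_mem := by
    rintro X ⟨R, hR, hbot⟩
    exact hA X R hR (le_bot_iff.mp hbot)

/-- A sieve meeting every member of an ultrafilter belongs to it. -/
theorem IsUltra.mem_of_forall_inf_ne_bot {𝔘 : CatFilter 𝒞} (h𝔘 : 𝔘.IsUltra) {C : 𝒞}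
    {A : Sieve C} (hA : ∀ R ∈ 𝔘.F C, A ⊓ R ≠ ⊥) : A ∈ 𝔘.F C := by
  classical
  let B : ∀ X : 𝒞, Sieve X := Function.update (fun _ => ⊤) C A
  have hBC : B C = A := Function.update_self ..
  have hB : ∀ X, ∀ R ∈ 𝔘.F X, B X ⊓ R ≠ ⊥ := by
    intro X R hR
    by_cases hX : X = C
    · subst hX
      rw [hBC]
      exact hA R hR
    · have hBX : B X = ⊤ := Function.update_of_ne hX ..
      rw [hBX, top_inf_eq]
      rintro rfl
      exact 𝔘.bot_not_mem X hR
  exact h𝔘 (𝔘.adjoin B hB) (fun X R hR => ⟨R, hR, inf_le_right⟩) C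
    ⟨⊤, 𝔘.top_mem C, inf_le_left.trans hBC.le⟩

theorem IsUltra.mem_or_mem_of_sup_mem {𝔘 : CatFilter 𝒞} (h𝔘 : 𝔘.IsUltra) {C : 𝒞}
    {A B : Sieve C} (h : A ⊔ B ∈ 𝔘.F C) : A ∈ 𝔘.F C ∨ B ∈ 𝔘.F C := by
  by_contra! hAB
  obtain ⟨R, hR, hAR⟩ : ∃ R ∈ 𝔘.F C, A ⊓ R = ⊥ := by
    by_contra! hA
    exact hAB.1 (h𝔘.mem_of_forall_inf_ne_bot hA)
  obtain ⟨R', hR', hBR⟩ : ∃ R ∈ 𝔘.F C, B ⊓ R = ⊥ := by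
    by_contra! hB
    exact hAB.2 (h𝔘.mem_of_forall_inf_ne_bot hB)
  refine 𝔘.bot_not_mem C (𝔘.mono (𝔘.inf_mem h (𝔘.inf_mem hR hR')) ?_)
  rintro Y f ⟨hf, hfR, hfR'⟩
  rcases (Sieve.union_apply f).mp hf with hf | hf
  · exact hAR.le f ⟨hf, hfR⟩
  · exact hBR.le f ⟨hf, hfR'⟩

theorem IsUltra.exists_mem_of_finset_sup_mem {𝔘 : CatFilter 𝒞} (h𝔘 : 𝔘.IsUltra) {C : 𝒞}
    {ι : Type*} (s : Finset ι) (S : ι → Sieve C) (h : s.sup S ∈ 𝔘.F C) :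
    ∃ i ∈ s, S i ∈ 𝔘.F C := by
  classical
  induction s using Finset.induction_on with
  | empty => exact (𝔘.bot_not_mem C h).elim
  | insert a s _ ih =>
    rw [Finset.sup_insert] at h
    rcases h𝔘.mem_or_mem_of_sup_mem h with ha | hs
    · exact ⟨a, Finset.mem_insert_self a s, ha⟩
    · obtain ⟨i, hi, hSi⟩ := ih hs
      exact ⟨i, Finset.mem_insert_of_mem hi, hSi⟩

end CatFilter

/-- If the union of a finite sequence of sieves belongs to an ultrafilter,
then at least one of them does. -/
theorem ultrafilter_mem_of_finite_union_mem
    {𝒞 : Type u} [Category.{v} 𝒞] [Limits.HasFiniteLimits 𝒞]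
    (𝔘 : CatFilter 𝒞) (h𝔘 : 𝔘.IsUltra) (C : 𝒞) (n : ℕ) (S : Fin n → Sieve C)
    (h : (Finset.univ.sup S) ∈ 𝔘.F C) : ∃ i : Fin n, S i ∈ 𝔘.F C := by
  obtain ⟨i, _, hi⟩ := h𝔘.exists_mem_of_finset_sup_mem Finset.univ S h
  exact ⟨i, hi⟩
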